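/- There exists κ > 0 such that for every odd differentiable function w : ℝ → ℝ with w and w' square integrable on ℝ and satisfying ∫_ℝ w(x)·Z₁(x) dx = 0, where Z₁(x) = 2^(-3/4)·√3·tanh(x/√2)·sech(x/√2)·cosh(x/(8√2)), one has ∫_ℝ ( (3/4)·w'(x)² - (21/10)·sech²(x/2)·w(x)² ) dx ≥ κ·∫_ℝ w'(x)² dx. -/

import Mathlib

open MeasureTheory

noncomputable def sech (x : ℝ) : ℝ := 1 / Real.cosh x

noncomputable def Z1 (x : ℝ) : ℝ :=
  (2 : ℝ) ^ (-(3 : ℝ) / 4) * Real.sqrt 3 * Real.tanh (x / Real.sqrt 2) * sech (x / Real.sqrt 2)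
    * Real.cosh (x / (8 * Real.sqrt 2))

section aux
open Real Set Filter Topology

/-! ### Elementary hyperbolic facts -/

lemma tanh_hasDerivAt (x : ℝ) : HasDerivAt Real.tanh (1 - Real.tanh x ^ 2) x := by
  have hc := (Real.cosh_pos x).ne'
  have h := (Real.hasDerivAt_sinh x).div (Real.hasDerivAt_cosh x) hc
  have e : Real.tanh = fun y => Real.sinh y / Real.cosh y := by
    funext y; exact Real.tanh_eq_sinh_div_cosh y
  have e2 : 1 - Real.tanh x ^ 2
      = (Real.cosh x * Real.cosh x - Real.sinh x * Real.sinh x) / Real.cosh x ^ 2 := by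
    rw [Real.tanh_eq_sinh_div_cosh]
    field_simp
  rw [e2, e]
  exact h

lemma sech_sq (x : ℝ) : 1 - Real.tanh x ^ 2 = 1 / Real.cosh x ^ 2 := by
  rw [Real.tanh_eq_sinh_div_cosh]
  have hc := (Real.cosh_pos x).ne'
  field_simp
  linarith [Real.cosh_sq x]

lemma sech_sq_pos (x : ℝ) : 0 < 1 - Real.tanh x ^ 2 := by
  rw [sech_sq]; have := Real.cosh_pos x; positivity

lemma sech_sq_le_one (x : ℝ) : 1 - Real.tanh x ^ 2 ≤ 1 := by
  nlinarith [sq_nonneg (Real.tanh x)]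

lemma exp_le_two_cosh (x : ℝ) : Real.exp x ≤ 2 * Real.cosh x := by
  rw [Real.cosh_eq]; linarith [Real.exp_pos (-x)]

lemma sech_sq_le_exp (x : ℝ) : 1 - Real.tanh x ^ 2 ≤ 4 * Real.exp (-(2 * x)) := by
  rw [sech_sq, div_le_iff₀ (by have := Real.cosh_pos x; positivity)]
  have h := exp_le_two_cosh x
  have h2 : Real.exp (-(2*x)) = (Real.exp x ^ 2)⁻¹ := by
    rw [Real.exp_neg, two_mul, Real.exp_add, sq]
  rw [h2]
  have h3 := Real.exp_pos x
  have : Real.exp x ^ 2 ≤ 4 * Real.cosh x ^ 2 := by nlinarith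
  rw [mul_assoc, inv_mul_eq_div, mul_div_assoc', le_div_iff₀ (by positivity)]
  linarith

lemma tanh_nonneg' {x : ℝ} (hx : 0 ≤ x) : 0 ≤ Real.tanh x := by
  rw [Real.tanh_eq_sinh_div_cosh]
  exact div_nonneg (Real.sinh_nonneg_iff.2 hx) (Real.cosh_pos x).le

lemma tanh_pos' {x : ℝ} (hx : 0 < x) : 0 < Real.tanh x := by
  rw [Real.tanh_eq_sinh_div_cosh]
  exact div_pos (Real.sinh_pos_iff.2 hx) (Real.cosh_pos x)

lemma abs_tanh_le_one (x : ℝ) : |Real.tanh x| ≤ 1 := by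
  rw [abs_le]; exact ⟨(Real.neg_one_lt_tanh x).le, (Real.tanh_lt_one x).le⟩

lemma continuous_tanh' : Continuous Real.tanh :=
  continuous_iff_continuousAt.2 fun x => (tanh_hasDerivAt x).continuousAt

lemma tanh_le_self' {x : ℝ} (hx : 0 ≤ x) : Real.tanh x ≤ x := by
  have hm : MonotoneOn (fun y => y - Real.tanh y) (Ici 0) := by
    apply monotoneOn_of_deriv_nonneg (convex_Ici 0)
    · exact (continuous_id.sub continuous_tanh').continuousOn
    · intro y _
      exact ((hasDerivAt_id y).sub (tanh_hasDerivAt y)).differentiableAt.differentiableWithinAt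
    · intro y _
      have := ((hasDerivAt_id y).sub (tanh_hasDerivAt y)).deriv
      change 0 ≤ deriv (id - Real.tanh) y
      rw [this]; nlinarith [sq_nonneg (Real.tanh y)]
  have := hm (self_mem_Ici) hx hx
  simp at this; linarith

lemma half_le_tanh {x : ℝ} (hx : 0 ≤ x) (h1 : x ≤ 1) : x / 2 ≤ Real.tanh x := by
  have hc : Real.cosh x ≤ 2 := by
    calc Real.cosh x ≤ Real.cosh 1 := by
          rw [Real.cosh_le_cosh, abs_of_nonneg hx, abs_one]; exact h1
      _ ≤ 2 := by
          rw [Real.cosh_eq]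
          have := Real.exp_one_lt_d9
          have h2 : Real.exp (-1) ≤ 1 := by rw [Real.exp_le_one_iff]; norm_num
          linarith
  have hs : x ≤ Real.sinh x := Real.self_le_sinh_iff.2 hx
  rw [Real.tanh_eq_sinh_div_cosh, le_div_iff₀ (Real.cosh_pos x)]
  nlinarith

lemma tendsto_tanh_one : Tendsto Real.tanh atTop (𝓝 1) := by
  have h1 : Tendsto (fun x : ℝ => 1 - 4 * Real.exp (-x)) atTop (𝓝 1) := by
    have := (Real.tendsto_exp_neg_atTop_nhds_zero.const_mul 4).const_sub 1
    simpa using this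
  refine tendsto_of_tendsto_of_tendsto_of_le_of_le' h1 tendsto_const_nhds ?_ ?_
  · filter_upwards [eventually_ge_atTop 0] with x hx
    have h := sech_sq_le_exp x
    have h0 := tanh_nonneg' hx
    have h2 : Real.exp (-(2*x)) ≤ Real.exp (-x) := by
      rw [Real.exp_le_exp]; linarith
    nlinarith [Real.tanh_lt_one x]
  · filter_upwards with x using (Real.tanh_lt_one x).le

/-! ### Exponentially decaying functions -/

lemma intOn_of_decay {f : ℝ → ℝ} (hf : Continuous f) {C : ℝ}
    (h : ∀ y, 0 ≤ y → |f y| ≤ C * Real.exp (-(y/2))) : IntegrableOn f (Ioi 0) := by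
  have h1 : IntegrableOn (fun y : ℝ => C * Real.exp ((-(1/2:ℝ)) * y)) (Ioi 0) :=
    (integrableOn_exp_mul_Ioi (by norm_num) 0).const_mul C
  refine Integrable.mono' h1 hf.aestronglyMeasurable ?_
  rw [ae_restrict_iff' measurableSet_Ioi]
  refine Eventually.of_forall fun y hy => ?_
  rw [Real.norm_eq_abs]
  convert h y (le_of_lt hy) using 3
  ring

lemma tendsto_of_decay {f : ℝ → ℝ} {C : ℝ}
    (h : ∀ y, 0 ≤ y → |f y| ≤ C * Real.exp (-(y/2))) : Tendsto f atTop (𝓝 0) := by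
  have h1 : Tendsto (fun y : ℝ => C * Real.exp (-(y/2))) atTop (𝓝 0) := by
    have : Tendsto (fun y : ℝ => Real.exp (-(y/2))) atTop (𝓝 0) :=
      Real.tendsto_exp_neg_atTop_nhds_zero.comp (tendsto_id.atTop_div_const (by norm_num))
    simpa using this.const_mul C
  refine squeeze_zero_norm' ?_ h1
  filter_upwards [eventually_ge_atTop 0] with y hy
  exact h y hy

/-- A function with square integrable derivative, vanishing at zero, grows slowly. -/
lemma growth {W : ℝ → ℝ} (hW : Differentiable ℝ W) (h0 : W 0 = 0)
    (hi : IntegrableOn (fun y => deriv W y ^ 2) (Ioi 0)) :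
    ∃ C, 0 ≤ C ∧ ∀ y, 0 ≤ y → |W y| ≤ C * Real.exp (y/2) := by
  set D := ∫ y in Ioi 0, deriv W y ^ 2 with hD
  have hD0 : 0 ≤ D := setIntegral_nonneg measurableSet_Ioi fun y _ => sq_nonneg _
  refine ⟨1 + D/2, by positivity, fun y hy => ?_⟩
  have hiy : IntervalIntegrable (fun y => deriv W y ^ 2) volume 0 y :=
    (intervalIntegrable_iff_integrableOn_Ioc_of_le hy).2 (hi.mono_set Ioc_subset_Ioi_self)
  have hg : IntervalIntegrable (fun y => (1 + deriv W y ^ 2)/2) volume 0 y :=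
    (intervalIntegrable_const.add hiy).div_const 2
  have hd : IntervalIntegrable (deriv W) volume 0 y := by
    refine hg.mono_fun (measurable_deriv W).aestronglyMeasurable ?_
    refine Eventually.of_forall fun z => ?_
    change ‖deriv W z‖ ≤ ‖(1 + deriv W z ^ 2)/2‖
    rw [Real.norm_eq_abs, Real.norm_eq_abs, abs_of_nonneg (a := (1 + deriv W z ^ 2)/2) (by positivity), abs_le]
    constructor <;> nlinarith [sq_nonneg (deriv W z - 1), sq_nonneg (deriv W z + 1)]
  have h1 : ∫ z in (0:ℝ)..y, deriv W z = W y - W 0 :=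
    intervalIntegral.integral_eq_sub_of_hasDerivAt (fun z _ => (hW z).hasDerivAt) hd
  have h2 : |∫ z in (0:ℝ)..y, deriv W z| ≤ ∫ z in (0:ℝ)..y, (1 + deriv W z ^ 2)/2 := by
    rw [← Real.norm_eq_abs]
    refine intervalIntegral.norm_integral_le_of_norm_le hy ?_ hg
    refine Eventually.of_forall fun z _ => ?_
    rw [Real.norm_eq_abs, abs_le]
    constructor <;> nlinarith [sq_nonneg (deriv W z - 1), sq_nonneg (deriv W z + 1)]
  have h3 : ∫ z in (0:ℝ)..y, (1 + deriv W z ^ 2)/2 = (y + ∫ z in (0:ℝ)..y, deriv W z ^ 2)/2 := by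
    rw [intervalIntegral.integral_div, intervalIntegral.integral_add intervalIntegrable_const hiy]
    simp
  have h4 : ∫ z in (0:ℝ)..y, deriv W z ^ 2 ≤ D := by
    rw [intervalIntegral.integral_of_le hy]
    exact setIntegral_mono_set hi (Eventually.of_forall fun z => sq_nonneg _)
      Ioc_subset_Ioi_self.eventuallyLE
  rw [h1, h0, sub_zero, h3] at h2
  have h5 := Real.add_one_le_exp (y/2)
  have h6 : 1 ≤ Real.exp (y/2) := by rw [Real.one_le_exp_iff]; positivity
  nlinarith

/-! ### The weighted Poincaré inequality (second odd Legendre eigenvalue) -/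

/-- Algebraic identity behind the Poincaré inequality (completion of squares). -/
lemma sos_identity (t r d F : ℝ) (ht : t ≠ 0) :
    d ^ 2 - 12 * (1 - t ^ 2) * r ^ 2
      - (d - 6 * (1 - t^2) / t * r + 15 * (1 - t^2) / t^3 * F)^2
    = (1 - t^2) * (-6 / t^2 - 6) * r^2 + 12 * (1 - t^2)/t * r * d
      - 30 * ((1 - t^2) * (-3 / t^4 + 1/t^2) * r * F + (1 - t^2)/t^3 * d * F
          + (1-t^2)/t^3 * r * (r * t * (1-t^2)))
      + (1 - t^2) * (-225/t^6 + 225/t^4) * F^2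
      + (45/t^5 - 75/t^3) * 2 * F * (r * t * (1-t^2)) := by
  field_simp
  ring

noncomputable def PhiB (R F : ℝ → ℝ) (y : ℝ) : ℝ :=
  (6 / Real.tanh y - 6 * Real.tanh y) * R y ^ 2
    - 30 * ((1 / Real.tanh y ^ 3 - 1 / Real.tanh y) * R y * F y)
    + (45 / Real.tanh y ^ 5 - 75 / Real.tanh y ^ 3) * F y ^ 2

lemma PhiB_hasDerivAt {R F : ℝ → ℝ} {y d : ℝ} (hy : 0 < y) (hR : HasDerivAt R d y)
    (hF : HasDerivAt F (R y * Real.tanh y * (1 - Real.tanh y ^ 2)) y) :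
    HasDerivAt (PhiB R F)
      (d ^ 2 - 12 * (1 - Real.tanh y ^ 2) * R y ^ 2
      - (d - 6 * (1 - Real.tanh y^2) / Real.tanh y * R y
          + 15 * (1 - Real.tanh y^2) / Real.tanh y^3 * F y)^2) y := by
  have ht := (tanh_pos' hy).ne'
  have hT := tanh_hasDerivAt y
  rw [sos_identity _ _ _ _ ht]
  have i1 := hT.fun_inv ht
  have h1 := (((i1.const_mul 6).fun_sub (hT.const_mul 6)).fun_mul (hR.fun_pow 2))
  have h2 := ((((i1.fun_pow 3).fun_sub i1).fun_mul hR).fun_mul hF).const_mul 30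
  have h3 := ((((i1.fun_pow 5).const_mul 45).fun_sub ((i1.fun_pow 3).const_mul 75)).fun_mul
    (hF.fun_pow 2))
  have h := (h1.fun_sub h2).fun_add h3
  have e : PhiB R F = fun y =>
    (6 * (Real.tanh y)⁻¹ - 6 * Real.tanh y) * R y ^ 2
    - 30 * (((Real.tanh y)⁻¹ ^ 3 - (Real.tanh y)⁻¹) * R y * F y)
    + (45 * (Real.tanh y)⁻¹ ^ 5 - 75 * (Real.tanh y)⁻¹ ^ 3) * F y ^ 2 := by
    funext z; simp only [PhiB]; simp [div_eq_mul_inv]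
  rw [e]
  refine h.congr_deriv ?_
  simp only [Nat.add_one_sub_one, Nat.cast_ofNat]
  norm_num
  field_simp
  ring

lemma phi_bound {t K ρ f : ℝ} (ht0 : 0 < t) (ht1 : t ≤ 1) (hK0 : 0 ≤ K)
    (fR : |ρ| ≤ 2 * K) (fF : |f| ≤ 8 * K) :
    |6 * (1 - t^2) * ρ^2 - 30 * (1 - t^2) * (ρ * f) + (45 - 75 * t^2) * f^2|
          ≤ 4000 * K^2 := by
  have q1 : ρ^2 ≤ 4 * K^2 := by
    have := sq_le_sq' (abs_le.1 fR).1 (abs_le.1 fR).2; nlinarith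
  have q2 : f^2 ≤ 64 * K^2 := by
    have := sq_le_sq' (abs_le.1 fF).1 (abs_le.1 fF).2; nlinarith
  have q3 : |ρ * f| ≤ 16 * K^2 := by
    rw [abs_mul]
    calc |ρ| * |f| ≤ (2*K) * (8*K) := by gcongr
      _ = 16 * K^2 := by ring
  have q4 : 0 ≤ 1 - t^2 := by nlinarith
  have q5 : 1 - t^2 ≤ 1 := by nlinarith [sq_nonneg t]
  have r1 : |6 * (1 - t^2) * ρ^2| ≤ 24 * K^2 := by
    rw [abs_of_nonneg (by positivity)]; nlinarith [sq_nonneg ρ]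
  have r2 : |30 * (1 - t^2) * (ρ * f)| ≤ 480 * K^2 := by
    rw [abs_mul, abs_of_nonneg (a := 30 * (1 - t^2)) (by positivity)]
    nlinarith [abs_nonneg (ρ * f)]
  have r3 : |(45 - 75 * t^2) * f^2| ≤ 2880 * K^2 := by
    rw [abs_mul, abs_of_nonneg (sq_nonneg f)]
    have : |45 - 75 * t^2| ≤ 45 := by
      rw [abs_le]; constructor <;> nlinarith [sq_nonneg t]
    nlinarith [sq_nonneg f]
  have := abs_add_le (6 * (1 - t^2) * ρ^2 - 30 * (1 - t^2) * (ρ * f)) ((45 - 75 * t^2) * f^2)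
  have := abs_sub (6 * (1 - t^2) * ρ^2) (30 * (1 - t^2) * (ρ * f))
  nlinarith [sq_nonneg K]

set_option maxHeartbeats 1000000 in
theorem poincare12 {R : ℝ → ℝ} (hR : Differentiable ℝ R) (h0 : R 0 = 0)
    (hi : IntegrableOn (fun y => deriv R y ^ 2) (Ioi 0))
    (ho : ∫ y in Ioi 0, R y * Real.tanh y * (1 - Real.tanh y ^ 2) = 0) :
    12 * ∫ y in Ioi 0, (1 - Real.tanh y ^ 2) * R y ^ 2 ≤ ∫ y in Ioi 0, deriv R y ^ 2 := by
  obtain ⟨C, hC0, hC⟩ := growth hR h0 hi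
  have hRc := hR.continuous
  have htc := continuous_tanh'
  have hexp : ∀ y : ℝ, Real.exp (y/2) * Real.exp (-(2*y)) = Real.exp (-(3/2*y)) := by
    intro y; rw [← Real.exp_add]; congr 1; ring
  have hle : ∀ y : ℝ, 0 ≤ y → Real.exp (-(3/2*y)) ≤ Real.exp (-(y/2)) := by
    intro y hy; rw [Real.exp_le_exp]; linarith
  -- the density
  have hg : ∀ y, 0 ≤ y → |R y * Real.tanh y * (1 - Real.tanh y ^ 2)|
      ≤ 4 * C * Real.exp (-(y/2)) := by
    intro y hy
    rw [abs_mul, abs_mul, abs_of_pos (sech_sq_pos y)]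
    have e1 := hC y hy
    have e2 := abs_tanh_le_one y
    have e3 := sech_sq_le_exp y
    calc |R y| * |Real.tanh y| * (1 - Real.tanh y ^ 2)
        ≤ (C * Real.exp (y/2)) * 1 * (4 * Real.exp (-(2*y))) := by
          gcongr
          exact (sech_sq_pos y).le
      _ = 4 * C * (Real.exp (y/2) * Real.exp (-(2*y))) := by ring
      _ ≤ 4 * C * Real.exp (-(y/2)) := by
          rw [hexp]; have := hle y hy; gcongr
  have hgc : Continuous fun y => R y * Real.tanh y * (1 - Real.tanh y ^ 2) := by fun_prop
  have hgi := intOn_of_decay hgc hg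
  have hs : ∀ y, 0 ≤ y → |(1 - Real.tanh y ^ 2) * R y ^ 2| ≤ 4 * C^2 * Real.exp (-(y/2)) := by
    intro y hy
    rw [abs_mul, abs_of_pos (sech_sq_pos y), abs_pow]
    have e1 := hC y hy
    have e3 := sech_sq_le_exp y
    calc (1 - Real.tanh y ^ 2) * |R y| ^ 2
        ≤ (4 * Real.exp (-(2*y))) * (C * Real.exp (y/2)) ^ 2 := by gcongr
      _ = 4 * C^2 * (Real.exp (y/2) * (Real.exp (y/2) * Real.exp (-(2*y)))) := by ring
      _ ≤ 4 * C^2 * Real.exp (-(y/2)) := by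
          rw [hexp, ← Real.exp_add]
          gcongr; linarith
  have hsc : Continuous fun y => (1 - Real.tanh y ^ 2) * R y ^ 2 := by fun_prop
  have hsi := intOn_of_decay hsc hs
  set F : ℝ → ℝ := fun y => ∫ z in (0:ℝ)..y, R z * Real.tanh z * (1 - Real.tanh z ^ 2) with hFdef
  have hF : ∀ y, HasDerivAt F (R y * Real.tanh y * (1 - Real.tanh y ^ 2)) y := fun y =>
    intervalIntegral.integral_hasDerivAt_right (hgc.intervalIntegrable 0 y)
      (hgc.stronglyMeasurableAtFilter _ _) hgc.continuousAt
  have hFlim : Tendsto F atTop (𝓝 0) := by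
    have := intervalIntegral_tendsto_integral_Ioi 0 hgi tendsto_id
    rw [ho] at this
    exact this
  set φ : ℝ → ℝ := fun y => deriv R y ^ 2 - 12 * ((1 - Real.tanh y ^ 2) * R y ^ 2) with hφ
  have hφi : IntegrableOn φ (Ioi 0) := hi.sub (hsi.const_mul 12)
  have hfin : ∀ ε b, 0 < ε → ε ≤ b → PhiB R F b - PhiB R F ε ≤ ∫ y in ε..b, φ y := by
    intro ε b hε hb
    refine intervalIntegral.sub_le_integral_of_hasDeriv_right_of_le hb ?_ (g' := fun y =>
      (deriv R y ^ 2 - 12 * (1 - Real.tanh y ^ 2) * R y ^ 2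
      - (deriv R y - 6 * (1 - Real.tanh y^2) / Real.tanh y * R y
          + 15 * (1 - Real.tanh y^2) / Real.tanh y^3 * F y)^2)) ?_ ?_ ?_
    · intro y hy
      exact (PhiB_hasDerivAt (hε.trans_le hy.1) (hR y).hasDerivAt
        (hF y)).continuousAt.continuousWithinAt
    · intro y hy
      exact (PhiB_hasDerivAt (hε.trans hy.1) (hR y).hasDerivAt (hF y)).hasDerivWithinAt
    · exact hφi.mono_set fun y hy => hε.trans_le hy.1
    · intro y _
      simp only [hφ]
      nlinarith [sq_nonneg (deriv R y - 6 * (1 - Real.tanh y^2) / Real.tanh y * R y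
          + 15 * (1 - Real.tanh y^2) / Real.tanh y^3 * F y)]
  -- limit at infinity
  have hlimTop : Tendsto (PhiB R F) atTop (𝓝 0) := by
    have hti := tendsto_tanh_one.inv₀ one_ne_zero
    have a1 : Tendsto (fun y => (1 - Real.tanh y ^ 2) * R y ^ 2) atTop (𝓝 0) := tendsto_of_decay hs
    have a2 : Tendsto (fun y => R y * Real.tanh y * (1 - Real.tanh y ^ 2)) atTop (𝓝 0) :=
      tendsto_of_decay hg
    have b1 := (hti.const_mul 6).mul a1
    have b2 := ((((hti.pow 4).mul a2).mul hFlim).const_mul 30)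
    have b3 := ((((hti.pow 5).const_mul 45).sub ((hti.pow 3).const_mul 75))).mul (hFlim.pow 2)
    have b := (b1.sub b2).add b3
    norm_num at b
    refine b.congr' ?_
    filter_upwards [eventually_gt_atTop 0] with y hy
    have ht := (tanh_pos' hy).ne'
    simp only [PhiB]
    field_simp
  -- limit at zero
  have hlim0 : Tendsto (PhiB R F) (𝓝[>] 0) (𝓝 0) := by
    obtain ⟨K, hK0, δ, hδ, hK⟩ : ∃ K, 0 ≤ K ∧ ∃ δ > 0, ∀ y, 0 ≤ y → y < δ → |R y| ≤ K * y := by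
      have hb := ((hR 0).hasDerivAt.isBigO_sub).bound
      obtain ⟨c, hc⟩ := hb
      rw [Metric.eventually_nhds_iff] at hc
      obtain ⟨δ, hδ, hc⟩ := hc
      refine ⟨|c|, abs_nonneg _, δ, hδ, fun y hy hyd => ?_⟩
      have := hc (y := y) (by rw [Real.dist_eq, sub_zero, abs_of_nonneg hy]; exact hyd)
      rw [h0, sub_zero, sub_zero, Real.norm_eq_abs, Real.norm_eq_abs, abs_of_nonneg hy] at this
      exact this.trans (mul_le_mul_of_nonneg_right (le_abs_self c) hy)
    have hFK : ∀ y, 0 ≤ y → y < δ → |F y| ≤ K * y^3 := by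
      intro y hy hyd
      have : ‖∫ z in (0:ℝ)..y, R z * Real.tanh z * (1 - Real.tanh z ^ 2)‖
          ≤ (K * y^2) * |y - 0| := by
        refine intervalIntegral.norm_integral_le_of_norm_le_const fun z hz => ?_
        rw [uIoc_of_le hy] at hz
        rw [Real.norm_eq_abs, abs_mul, abs_mul, abs_of_pos (sech_sq_pos z),
          abs_of_nonneg (tanh_nonneg' hz.1.le)]
        have e1 := hK z hz.1.le (hz.2.trans_lt hyd)
        have e2 := tanh_le_self' hz.1.le
        have e3 := sech_sq_le_one z
        have e4 := tanh_nonneg' hz.1.le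
        have e5 := hz.2
        have e6 := hz.1.le
        calc |R z| * Real.tanh z * (1 - Real.tanh z ^ 2) ≤ (K * z) * z * 1 := by
              gcongr
              exact (sech_sq_pos z).le
          _ ≤ (K * y) * y * 1 := by gcongr
          _ = K * y^2 := by ring
      rw [Real.norm_eq_abs, sub_zero, abs_of_nonneg hy] at this
      calc |F y| ≤ K * y^2 * y := this
        _ = K * y^3 := by ring
    have hbound : ∀ᶠ y in 𝓝[>] (0:ℝ), ‖PhiB R F y‖ ≤ (4000 * K^2) * y := by
      have : ∀ᶠ y in 𝓝[>] (0:ℝ), y ∈ Ioo 0 (min δ 1) :=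
        Ioo_mem_nhdsGT (lt_min hδ one_pos)
      filter_upwards [this] with y hy
      have hy0 := hy.1
      have hyd := hy.2.trans_le (min_le_left _ _)
      have hy1 := (hy.2.trans_le (min_le_right _ _)).le
      set t := Real.tanh y with ht
      have ht0 : 0 < t := tanh_pos' hy0
      have ht1 : t ≤ 1 := (Real.tanh_lt_one y).le
      have ht2 : t ≤ y := tanh_le_self' hy0.le
      have ht3 : y ≤ 2 * t := by have := half_le_tanh hy0.le hy1; linarith
      have eR := hK y hy0.le hyd
      have eF := hFK y hy0.le hyd
      have fR : |R y / t| ≤ 2 * K := by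
        rw [abs_div, abs_of_pos ht0, div_le_iff₀ ht0]; nlinarith
      have fF : |F y / t^3| ≤ 8 * K := by
        rw [abs_div, abs_of_pos (pow_pos ht0 3), div_le_iff₀ (pow_pos ht0 3)]
        have : y^3 ≤ (2*t)^3 := by gcongr
        nlinarith
      set ρ := R y / t
      set f := F y / t^3
      have eq1 : R y = ρ * t := by simp only [ρ]; field_simp
      have eq2 : F y = f * t^3 := by simp only [f]; field_simp
      have eqP : PhiB R F y = t * (6 * (1 - t^2) * ρ^2 - 30 * (1 - t^2) * (ρ * f)
          + (45 - 75 * t^2) * f^2) := by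
        simp only [PhiB, ← ht, eq1, eq2]
        field_simp
      rw [eqP, Real.norm_eq_abs, abs_mul, abs_of_pos ht0]
      have q6 := phi_bound ht0 ht1 hK0 fR fF
      calc t * |6 * (1 - t^2) * ρ^2 - 30 * (1 - t^2) * (ρ * f) + (45 - 75 * t^2) * f^2|
          ≤ y * (4000 * K^2) := by gcongr
        _ = 4000 * K^2 * y := by ring
    refine squeeze_zero_norm' hbound ?_
    have : Tendsto (fun y : ℝ => 4000 * K^2 * y) (𝓝 0) (𝓝 (4000 * K^2 * 0)) :=
      (continuous_const.mul continuous_id).tendsto 0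
    rw [mul_zero] at this
    exact this.mono_left nhdsWithin_le_nhds
  -- conclude
  have hII : ∀ b : ℝ, 0 ≤ b → IntervalIntegrable φ volume 0 b := fun b hb =>
    (intervalIntegrable_iff_integrableOn_Ioc_of_le hb).2 (hφi.mono_set Ioc_subset_Ioi_self)
  have s1 : ∀ ε, 0 < ε → - PhiB R F ε ≤ (∫ y in Ioi 0, φ y) - ∫ y in (0:ℝ)..ε, φ y := by
    intro ε hε
    have l1 : Tendsto (fun b => PhiB R F b - PhiB R F ε) atTop (𝓝 (0 - PhiB R F ε)) :=
      hlimTop.sub_const _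
    have l2 : Tendsto (fun b => (∫ y in (0:ℝ)..b, φ y) - ∫ y in (0:ℝ)..ε, φ y) atTop
        (𝓝 ((∫ y in Ioi 0, φ y) - ∫ y in (0:ℝ)..ε, φ y)) :=
      (intervalIntegral_tendsto_integral_Ioi 0 hφi tendsto_id).sub_const _
    rw [zero_sub] at l1
    refine le_of_tendsto_of_tendsto l1 l2 ?_
    filter_upwards [eventually_ge_atTop ε] with b hb
    have := hfin ε b hε hb
    rw [intervalIntegral.integral_interval_sub_left (hII b (hε.le.trans hb)) (hII ε hε.le)]
    exact this
  have s2 : Tendsto (fun ε => ∫ y in (0:ℝ)..ε, φ y) (𝓝[>] 0) (𝓝 0) := by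
    have hc : ContinuousOn (fun ε => ∫ y in (0:ℝ)..ε, φ y) (uIcc 0 1) :=
      intervalIntegral.continuousOn_primitive_interval
        ((hII 1 zero_le_one).1.congr_set_ae (by
          rw [uIcc_of_le zero_le_one]; exact Ioc_ae_eq_Icc.symm))
    rw [uIcc_of_le zero_le_one] at hc
    have := hc 0 (by simp)
    simp only [ContinuousWithinAt, intervalIntegral.integral_same] at this
    refine this.mono_left ?_
    rw [← nhdsWithin_Ioc_eq_nhdsGT (zero_lt_one' ℝ)]
    exact nhdsWithin_mono _ Ioc_subset_Icc_self
  have s3 : (0:ℝ) ≤ ∫ y in Ioi 0, φ y := by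
    have l1 := hlim0.neg
    have l2 := s2.const_sub (∫ y in Ioi 0, φ y)
    rw [neg_zero] at l1
    rw [sub_zero] at l2
    refine le_of_tendsto_of_tendsto l1 l2 ?_
    filter_upwards [self_mem_nhdsWithin] with ε hε using s1 ε hε
  have s4 : ∫ y in Ioi 0, φ y
      = (∫ y in Ioi 0, deriv R y ^ 2) - 12 * ∫ y in Ioi 0, (1 - Real.tanh y ^ 2) * R y ^ 2 := by
    rw [← integral_const_mul, ← integral_sub hi (hsi.const_mul 12)]
  linarith

/-! ### The antiderivative of the internal mode -/

noncomputable def psi (x : ℝ) : ℝ := Real.tanh x * (1 / Real.cosh x) * Real.cosh (x / 8)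

lemma psi_continuous : Continuous psi := by
  unfold psi
  have h1 := continuous_tanh'
  have h2 := Real.continuous_cosh
  have h3 : Continuous fun x => 1 / Real.cosh x :=
    continuous_const.div h2 fun x => (Real.cosh_pos x).ne'
  exact (h1.mul h3).mul (h2.comp (continuous_id.div_const 8))

lemma inv_cosh_le (x : ℝ) : 1 / Real.cosh x ≤ 2 * Real.exp (-x) := by
  rw [div_le_iff₀ (Real.cosh_pos x), Real.exp_neg]
  have h := exp_le_two_cosh x
  have h3 := Real.exp_pos x
  rw [mul_assoc, inv_mul_eq_div, mul_div_assoc', le_div_iff₀ h3]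
  linarith

lemma cosh_le_exp' {x : ℝ} (hx : 0 ≤ x) : Real.cosh x ≤ Real.exp x := by
  rw [Real.cosh_eq]
  have : Real.exp (-x) ≤ Real.exp x := by rw [Real.exp_le_exp]; linarith
  linarith

lemma psi_decay {x : ℝ} (hx : 0 ≤ x) : |psi x| ≤ 2 * Real.exp (-(7/8*x)) := by
  unfold psi
  rw [abs_mul, abs_mul, abs_of_pos (Real.cosh_pos _),
    abs_of_pos (one_div_pos.2 (Real.cosh_pos x))]
  have e1 := abs_tanh_le_one x
  have e2 := inv_cosh_le x
  have e3 : Real.cosh (x/8) ≤ Real.exp (x/8) := cosh_le_exp' (by positivity)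
  have e4 := (one_div_pos.2 (Real.cosh_pos x)).le
  calc |Real.tanh x| * (1 / Real.cosh x) * Real.cosh (x/8)
      ≤ 1 * (2 * Real.exp (-x)) * Real.exp (x/8) := by
        gcongr
    _ = 2 * Real.exp (-(7/8*x)) := by
        rw [one_mul, mul_assoc, ← Real.exp_add]; congr 2; ring

noncomputable def hfun (x : ℝ) : ℝ := (∫ y in Ioi 0, psi y) - ∫ y in (0:ℝ)..x, psi y

lemma psi_intOn : IntegrableOn psi (Ioi 0) := by
  refine intOn_of_decay psi_continuous (C := 2) fun y hy => (psi_decay hy).trans ?_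
  gcongr; linarith

lemma hfun_hasDerivAt (x : ℝ) : HasDerivAt hfun (-psi x) x := by
  have := (intervalIntegral.integral_hasDerivAt_right (psi_continuous.intervalIntegrable 0 x)
      (psi_continuous.stronglyMeasurableAtFilter _ _) psi_continuous.continuousAt).const_sub
      (∫ y in Ioi 0, psi y)
  exact this

lemma hfun_tendsto : Tendsto hfun atTop (𝓝 0) := by
  have := (intervalIntegral_tendsto_integral_Ioi 0 psi_intOn tendsto_id).const_sub
    (∫ y in Ioi 0, psi y)
  rw [sub_self] at this
  exact this

/-- A function with nonpositive derivative that tends to zero is nonnegative. -/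
lemma nonneg_of_deriv_nonpos {f f' : ℝ → ℝ} (hf : ∀ x, HasDerivAt f (f' x) x)
    (h : ∀ x, 0 ≤ x → f' x ≤ 0) (hl : Tendsto f atTop (𝓝 0)) {x : ℝ} (hx : 0 ≤ x) : 0 ≤ f x := by
  have hm : AntitoneOn f (Ici 0) := by
    apply antitoneOn_of_deriv_nonpos (convex_Ici 0)
    · exact fun y _ => (hf y).continuousAt.continuousWithinAt
    · exact fun y _ => (hf y).differentiableAt.differentiableWithinAt
    · intro y hy
      rw [interior_Ici] at hy
      rw [(hf y).deriv]; exact h y (le_of_lt hy)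
  refine le_of_tendsto hl ?_
  filter_upwards [eventually_ge_atTop x] with y hy
  exact hm hx (hx.trans hy) hy

noncomputable def Pf (x : ℝ) : ℝ := 1 / Real.cosh x * Real.cosh (x / 8)

lemma Pf_hasDerivAt (x : ℝ) :
    HasDerivAt Pf (-psi x + 1/8 * (1 / Real.cosh x) * Real.sinh (x/8)) x := by
  have hc := (Real.cosh_pos x).ne'
  have h1 := (Real.hasDerivAt_cosh x).fun_inv hc
  have h2 : HasDerivAt (fun x => Real.cosh (x/8)) (Real.sinh (x/8) * (1/8)) x :=
    HasDerivAt.cosh (f := fun x : ℝ => x/8) ((hasDerivAt_id x).div_const 8)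
  have h := h1.fun_mul h2
  have e : Pf = fun x => (Real.cosh x)⁻¹ * Real.cosh (x/8) := by
    funext z; simp [Pf]
  rw [e]
  refine h.congr_deriv ?_
  unfold psi
  rw [Real.tanh_eq_sinh_div_cosh]
  field_simp

lemma Pf_tendsto : Tendsto Pf atTop (𝓝 0) := by
  refine tendsto_of_decay (C := 2) fun x hx => ?_
  have e2 := inv_cosh_le x
  have e3 : Real.cosh (x/8) ≤ Real.exp (x/8) := cosh_le_exp' (by positivity)
  have e4 := (one_div_pos.2 (Real.cosh_pos x)).le
  unfold Pf
  rw [abs_of_nonneg (mul_nonneg e4 (Real.cosh_pos _).le)]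
  calc 1 / Real.cosh x * Real.cosh (x/8) ≤ (2 * Real.exp (-x)) * Real.exp (x/8) := by
        gcongr
    _ = 2 * Real.exp (-x + x/8) := by rw [mul_assoc, ← Real.exp_add]
    _ ≤ _ := by gcongr; linarith

lemma tanh_mul_eight {s : ℝ} (hs : 0 ≤ s) :
    Real.sinh (8*s) * Real.cosh s ≤ 8 * (Real.sinh s * Real.cosh (8*s)) := by
  have hd : ∀ x, HasDerivAt (fun s => 8 * (Real.sinh s * Real.cosh (8*s))
      - Real.sinh (8*s) * Real.cosh s) (63 * (Real.sinh x * Real.sinh (8*x))) x := by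
    intro x
    have hl : HasDerivAt (fun s : ℝ => 8 * s) 8 x := by
      simpa using (hasDerivAt_id x).const_mul 8
    have a1 : HasDerivAt (fun s => Real.sinh (8*s)) (Real.cosh (8*x) * 8) x :=
      (Real.hasDerivAt_sinh (8*x)).comp x hl
    have a2 : HasDerivAt (fun s => Real.cosh (8*s)) (Real.sinh (8*x) * 8) x :=
      (Real.hasDerivAt_cosh (8*x)).comp x hl
    have h := (((Real.hasDerivAt_sinh x).fun_mul a2).const_mul 8).fun_sub
      (a1.fun_mul (Real.hasDerivAt_cosh x))
    refine h.congr_deriv ?_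
    ring
  have hm : MonotoneOn (fun s => 8 * (Real.sinh s * Real.cosh (8*s))
      - Real.sinh (8*s) * Real.cosh s) (Ici 0) := by
    apply monotoneOn_of_deriv_nonneg (convex_Ici 0)
    · exact fun y _ => (hd y).continuousAt.continuousWithinAt
    · exact fun y _ => (hd y).differentiableAt.differentiableWithinAt
    · intro y hy
      rw [interior_Ici] at hy
      have hy' : 0 ≤ y := le_of_lt hy
      rw [(hd y).deriv]
      have := Real.sinh_nonneg_iff.2 hy'
      have := Real.sinh_nonneg_iff.2 (by positivity : 0 ≤ 8 * y)
      positivity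
  have := hm self_mem_Ici hs hs
  simp at this
  linarith

lemma hfun_lower {x : ℝ} (hx : 0 ≤ x) : 64/63 * Pf x ≤ hfun x := by
  have hd : ∀ x, HasDerivAt (fun x => hfun x - 64/63 * Pf x)
      (-psi x - 64/63 * (-psi x + 1/8 * (1 / Real.cosh x) * Real.sinh (x/8))) x := fun x =>
    (hfun_hasDerivAt x).fun_sub ((Pf_hasDerivAt x).const_mul _)
  have hl : Tendsto (fun x => hfun x - 64/63 * Pf x) atTop (𝓝 0) := by
    simpa using hfun_tendsto.sub (Pf_tendsto.const_mul (64/63))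
  have := nonneg_of_deriv_nonpos hd (fun y hy => ?_) hl hx
  · linarith
  · have h8 := tanh_mul_eight (s := y/8) (by positivity)
    rw [mul_div_cancel₀ _ (by norm_num : (8:ℝ) ≠ 0)] at h8
    have hc := Real.cosh_pos y
    have : psi y ≤ 8 * (1 / Real.cosh y * Real.sinh (y/8)) := by
      unfold psi
      rw [Real.tanh_eq_sinh_div_cosh]
      have : Real.sinh y / Real.cosh y * (1 / Real.cosh y) * Real.cosh (y/8)
        = (Real.sinh y * Real.cosh (y/8)) / Real.cosh y ^ 2 := by field_simp
      rw [this, div_le_iff₀ (by positivity)]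
      have : 8 * (1 / Real.cosh y * Real.sinh (y/8)) * Real.cosh y ^ 2
        = 8 * (Real.sinh (y/8) * Real.cosh y) := by field_simp
      rw [this]; exact h8
    nlinarith

lemma hfun_upper {x : ℝ} (hx : 0 ≤ x) :
    hfun x ≤ Pf x + Real.exp (-(7/8*x)) / 7 - Real.exp (-(9/8*x)) / 9 := by
  have he : ∀ c x : ℝ, HasDerivAt (fun x => Real.exp (-(c*x))) (Real.exp (-(c*x)) * (-c)) x := by
    intro c x
    have hl : HasDerivAt (fun x : ℝ => -(c*x)) (-c) x := by
      simpa using ((hasDerivAt_id x).const_mul c).fun_neg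
    exact hl.exp
  have hd : ∀ x, HasDerivAt (fun x => Pf x + Real.exp (-(7/8*x)) / 7 - Real.exp (-(9/8*x)) / 9
      - hfun x) ((-psi x + 1/8 * (1 / Real.cosh x) * Real.sinh (x/8))
        + Real.exp (-(7/8*x)) * (-(7/8)) / 7 - Real.exp (-(9/8*x)) * (-(9/8)) / 9 - (-psi x)) x :=
    fun x => (((Pf_hasDerivAt x).fun_add ((he _ x).div_const 7)).fun_sub
      ((he _ x).div_const 9)).fun_sub (hfun_hasDerivAt x)
  have ht : ∀ c : ℝ, 0 < c → Tendsto (fun x : ℝ => Real.exp (-(c*x))) atTop (𝓝 0) := fun c hc =>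
    Real.tendsto_exp_neg_atTop_nhds_zero.comp (tendsto_id.const_mul_atTop hc)
  have hl : Tendsto (fun x => Pf x + Real.exp (-(7/8*x)) / 7 - Real.exp (-(9/8*x)) / 9
      - hfun x) atTop (𝓝 0) := by
    have := ((Pf_tendsto.add ((ht (7/8) (by norm_num)).div_const 7)).sub
      ((ht (9/8) (by norm_num)).div_const 9)).sub hfun_tendsto
    simpa using this
  have := nonneg_of_deriv_nonpos hd (fun y hy => ?_) hl hx
  · linarith
  · have e1 := inv_cosh_le y
    have e2 : 0 ≤ Real.sinh (y/8) := Real.sinh_nonneg_iff.2 (by positivity)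
    have e3 : 2 * Real.exp (-y) * Real.sinh (y/8)
        = Real.exp (-(7/8*y)) - Real.exp (-(9/8*y)) := by
      rw [Real.sinh_eq]
      have a1 : Real.exp (-(7/8*y)) = Real.exp (-y) * Real.exp (y/8) := by
        rw [← Real.exp_add]; congr 1; ring
      have a2 : Real.exp (-(9/8*y)) = Real.exp (-y) * Real.exp (-(y/8)) := by
        rw [← Real.exp_add]; congr 1; ring
      rw [a1, a2]; ring
    have := mul_le_mul_of_nonneg_right e1 e2
    nlinarith

lemma psi_nonneg {x : ℝ} (hx : 0 ≤ x) : 0 ≤ psi x := by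
  unfold psi
  have := tanh_nonneg' hx
  have := Real.cosh_pos x
  have := Real.cosh_pos (x/8)
  positivity

lemma hfun_antitone : AntitoneOn hfun (Ici 0) := by
  apply antitoneOn_of_deriv_nonpos (convex_Ici 0)
  · exact fun y _ => (hfun_hasDerivAt y).continuousAt.continuousWithinAt
  · exact fun y _ => (hfun_hasDerivAt y).differentiableAt.differentiableWithinAt
  · intro y hy
    rw [interior_Ici] at hy
    rw [(hfun_hasDerivAt y).deriv]
    have := psi_nonneg (le_of_lt hy); linarith

/-- The upper bound in terms of `p = exp (-x/8)`. -/
lemma hfun_upper_p {p x : ℝ} (hx : 0 ≤ x) (hp : p = Real.exp (-(x/8))) :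
    hfun x ≤ (p^7 + p^9) / (1 + p^16) + p^7/7 - p^9/9 := by
  have h := hfun_upper hx
  have hp0 : 0 < p := hp ▸ Real.exp_pos _
  have e : ∀ n : ℕ, p^n = Real.exp (-(n/8*x)) := by
    intro n; rw [hp, ← Real.exp_nat_mul]; congr 1; ring
  have e7 : Real.exp (-(7/8*x)) = p^7 := by rw [e]; norm_num
  have e9 : Real.exp (-(9/8*x)) = p^9 := by rw [e]; norm_num
  have e8 : Real.exp (-x) = p^8 := by rw [e]; norm_num
  have e8' : Real.exp x = (p^8)⁻¹ := by rw [← e8, Real.exp_neg, inv_inv]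
  have e1' : Real.exp (x/8) = p⁻¹ := by rw [hp, Real.exp_neg, inv_inv]
  have eP : Pf x = (p^7 + p^9) / (1 + p^16) := by
    unfold Pf
    rw [Real.cosh_eq, Real.cosh_eq, e8, e8', e1', ← hp]
    field_simp
  rw [e7, e9, eP] at h
  exact h

lemma cosh_sqrt_two_le (y : ℝ) : Real.cosh (Real.sqrt 2 * y) ≤ Real.cosh y ^ 2 := by
  have h1 := Real.hasSum_cosh (Real.sqrt 2 * y)
  have h2 := Real.hasSum_cosh (2 * y)
  have h3 : HasSum (fun n : ℕ => if n = 0 then (1:ℝ) else 0) 1 := hasSum_ite_eq 0 1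
  have h4 := (h3.add h2).div_const 2
  have e : Real.cosh y ^ 2 = (1 + Real.cosh (2*y)) / 2 := by
    rw [Real.cosh_two_mul, Real.cosh_sq]; ring
  rw [e]
  refine hasSum_le (fun n => ?_) h1 h4
  have a1 : (Real.sqrt 2 * y)^(2*n) = 2^n * (y^2)^n := by
    rw [mul_pow, pow_mul, Real.sq_sqrt (by norm_num), pow_mul]
  have a2 : (2 * y)^(2*n) = 4^n * (y^2)^n := by
    rw [mul_pow, pow_mul, pow_mul]; norm_num
  rw [a1, a2]
  rcases n with _ | n
  · simp
  · have : (2:ℝ)^(n+1) * 2 ≤ 4^(n+1) := by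
      have h5 : (4:ℝ)^(n+1) = 2^(n+1) * 2^(n+1) := by rw [← mul_pow]; norm_num
      rw [h5]
      have : (2:ℝ)^1 ≤ 2^(n+1) := pow_le_pow_right₀ (by norm_num) (by omega)
      have h6 : (0:ℝ) < 2^(n+1) := by positivity
      nlinarith
    have h7 : (0:ℝ) ≤ (y^2)^(n+1) / ((2*(n+1)).factorial : ℝ) := by positivity
    simp only [Nat.add_eq_zero_iff, one_ne_zero, and_false, if_false, zero_add]
    rw [mul_div_assoc, mul_div_assoc]
    nlinarith

/-! ### The function `Gf` -/

noncomputable def Gf (y : ℝ) : ℝ := hfun (Real.sqrt 2 * y) - 64/63 * (1 - Real.tanh y ^ 2)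

lemma Gf_hasDerivAt (y : ℝ) : HasDerivAt Gf
    (128/63 * (Real.tanh y * (1 - Real.tanh y ^ 2)) - Real.sqrt 2 * psi (Real.sqrt 2 * y)) y := by
  have hl : HasDerivAt (fun y : ℝ => Real.sqrt 2 * y) (Real.sqrt 2) y := by
    simpa using (hasDerivAt_id y).const_mul (Real.sqrt 2)
  have h1 : HasDerivAt (fun y => hfun (Real.sqrt 2 * y))
      (-psi (Real.sqrt 2 * y) * Real.sqrt 2) y := (hfun_hasDerivAt _).comp y hl
  have h2 := (((tanh_hasDerivAt y).fun_pow 2).const_sub 1).const_mul (64/63)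
  refine (h1.fun_sub h2).congr_deriv ?_
  norm_num
  ring

lemma Gf_continuous : Continuous Gf :=
  continuous_iff_continuousAt.2 fun y => (Gf_hasDerivAt y).continuousAt

lemma Gf_nonneg {y : ℝ} (hy : 0 ≤ y) : 0 ≤ Gf y := by
  unfold Gf
  have h1 := hfun_lower (x := Real.sqrt 2 * y) (by positivity)
  have h2 : 1 - Real.tanh y ^ 2 ≤ Pf (Real.sqrt 2 * y) := by
    rw [sech_sq]
    unfold Pf
    have e1 : 1 / Real.cosh y ^ 2 ≤ 1 / Real.cosh (Real.sqrt 2 * y) :=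
      one_div_le_one_div_of_le (Real.cosh_pos _) (cosh_sqrt_two_le y)
    have e2 := Real.one_le_cosh (Real.sqrt 2 * y / 8)
    have e3 := one_div_pos.2 (Real.cosh_pos (Real.sqrt 2 * y))
    nlinarith
  linarith

lemma Gf_le_exp {y : ℝ} (hy : 0 ≤ y) : Gf y ≤ 15/7 * Real.exp (-(6/5*y)) := by
  have h1 := hfun_upper_p (x := Real.sqrt 2 * y) (by positivity) rfl
  set p := Real.exp (-(Real.sqrt 2 * y / 8)) with hp
  have hp0 : 0 < p := Real.exp_pos _
  have hp1 : p ≤ 1 := by rw [hp, Real.exp_le_one_iff]; have : 0 ≤ Real.sqrt 2 * y := by positivity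
                         linarith
  have h2 : (p^7 + p^9) / (1 + p^16) ≤ 2 * p^7 := by
    rw [div_le_iff₀ (by positivity)]
    have : p^9 ≤ p^7 := pow_le_pow_of_le_one hp0.le hp1 (by norm_num)
    have : 0 ≤ p^7 * p^16 := by positivity
    nlinarith
  have h3 : p^7 ≤ Real.exp (-(6/5*y)) := by
    rw [hp, ← Real.exp_nat_mul, Real.exp_le_exp]
    have : (1.4:ℝ) ≤ Real.sqrt 2 := by
      apply Real.le_sqrt_of_sq_le; norm_num
    push_cast
    nlinarith
  have h4 : 0 ≤ p^9 := by positivity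
  have h5 := sech_sq_pos y
  unfold Gf
  linarith

/-! ### Numerical bound for the squared norm of `Gf` -/

def uNa (k : ℕ) : ℕ :=
  (100000 * ((566^k)^7*(567^k)^9 + (566^k)^9*(567^k)^7)) / ((567^k)^16 + (566^k)^16) + 1
def uNb (k : ℕ) : ℕ := (100000 * (566^k)^7) / (7 * (567^k)^7) + 1
def uNc (k : ℕ) : ℕ := (100000 * (566^k)^9) / (9 * (567^k)^9)
def uNd (k : ℕ) : ℕ :=
  (100000 * (256 * 99^(k+1) * 101^(k+1))) / (63 * (99^(k+1) + 101^(k+1))^2)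
def uN (k : ℕ) : ℕ := (uNa k + uNb k) - (uNc k + uNd k)
def sN : ℕ → ℕ
  | 0 => 0
  | n+1 => sN n + uN n ^ 2

theorem sN_bound : sN 400 ≤ 9100000000 := by decide +kernel

lemma div_le_natdiv (x y : ℕ) (hy : 0 < y) : (x:ℝ) / y ≤ ((x / y + 1 : ℕ) : ℝ) := by
  rw [div_le_iff₀ (by exact_mod_cast hy)]
  have h := Nat.lt_div_mul_add (a := x) hy
  have : x ≤ (x / y + 1) * y := by rw [add_mul, one_mul]; exact h.le
  exact_mod_cast this

lemma uNa_spec (k : ℕ) {p : ℝ} (hp : p = (566/567:ℝ)^k) :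
    100000 * ((p^7 + p^9) / (1 + p^16)) ≤ uNa k := by
  unfold uNa
  refine le_trans (le_of_eq ?_) (div_le_natdiv _ _ (by positivity))
  push_cast
  rw [hp, div_pow]
  have : (0:ℝ) < 567^k := by positivity
  have : (0:ℝ) < 566^k := by positivity
  generalize (567:ℝ)^k = b at *
  generalize (566:ℝ)^k = a at *
  field_simp

lemma uNb_spec (k : ℕ) {p : ℝ} (hp : p = (566/567:ℝ)^k) :
    100000 * (p^7/7) ≤ uNb k := by
  unfold uNb
  refine le_trans (le_of_eq ?_) (div_le_natdiv _ _ (by positivity))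
  push_cast
  rw [hp, div_pow]
  have : (0:ℝ) < 567^k := by positivity
  generalize (567:ℝ)^k = b at *
  generalize (566:ℝ)^k = a at *
  field_simp

lemma uNc_spec (k : ℕ) {p : ℝ} (hp : p = (566/567:ℝ)^k) :
    (uNc k : ℝ) ≤ 100000 * (p^9/9) := by
  unfold uNc
  refine le_trans Nat.cast_div_le (le_of_eq ?_)
  push_cast
  rw [hp, div_pow]
  have : (0:ℝ) < 567^k := by positivity
  generalize (567:ℝ)^k = b at *
  generalize (566:ℝ)^k = a at *
  field_simp

lemma uNd_spec (k : ℕ) {e : ℝ} (he : e = (99/101:ℝ)^(k+1)) :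
    (uNd k : ℝ) ≤ 100000 * (64/63 * (4 * e / (1 + e)^2)) := by
  unfold uNd
  refine le_trans Nat.cast_div_le (le_of_eq ?_)
  push_cast
  rw [he, div_pow]
  have : (0:ℝ) < 101^(k+1) := by positivity
  have : (0:ℝ) < 99^(k+1) := by positivity
  generalize (101:ℝ)^(k+1) = b at *
  generalize (99:ℝ)^(k+1) = a at *
  field_simp
  ring

lemma sech_sq_lower (k : ℕ) {y e : ℝ} (hy0 : 0 ≤ y) (hy : y ≤ (k+1)/100)
    (he : e = (99/101:ℝ)^(k+1)) : 4 * e / (1 + e)^2 ≤ 1 - Real.tanh y ^ 2 := by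
  set g := Real.exp (-(2*y)) with hg
  have hg0 : 0 < g := Real.exp_pos _
  have hg1 : g ≤ 1 := by rw [hg, Real.exp_le_one_iff]; linarith
  have he0 : 0 < e := by rw [he]; positivity
  have h1 : (99/101:ℝ) ≤ Real.exp (-(1/50)) := by
    have h := Real.exp_bound' (x := 1/50) (by norm_num) (by norm_num) (n := 3) (by norm_num)
    norm_num [Finset.sum_range_succ, Nat.factorial] at h
    have h2 := Real.exp_pos (1/50)
    rw [Real.exp_neg, le_inv_comm₀ (by norm_num) h2]
    norm_num
    linarith
  have heg : e ≤ g := by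
    calc e ≤ (Real.exp (-(1/50)))^(k+1) := by rw [he]; gcongr
      _ = Real.exp (-((k+1)/50)) := by
          rw [← Real.exp_nat_mul]; congr 1; push_cast; ring
      _ ≤ g := by rw [hg, Real.exp_le_exp]; linarith
  have hs : 1 - Real.tanh y ^ 2 = 4 * g / (1 + g)^2 := by
    rw [sech_sq, Real.cosh_eq]
    have e1 : g = Real.exp (-y) ^ 2 := by rw [hg, ← Real.exp_nat_mul]; congr 1; push_cast; ring
    have e2 : Real.exp y = (Real.exp (-y))⁻¹ := by rw [Real.exp_neg, inv_inv]
    rw [e1, e2]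
    have := Real.exp_pos (-y)
    field_simp
    norm_num
  rw [hs, div_le_div_iff₀ (by positivity) (by positivity)]
  have : 0 ≤ (g - e) * (1 - e * g) := by
    apply mul_nonneg (by linarith)
    nlinarith
  nlinarith

lemma Gf_step (k : ℕ) {y : ℝ} (hy0 : (k:ℝ)/100 ≤ y) (hy1 : y ≤ (k+1)/100) :
    Gf y ≤ uN k / 100000 := by
  have hy : 0 ≤ y := le_trans (by positivity) hy0
  set L := Real.log (567/566) with hL
  have hL0 : 0 ≤ L := Real.log_nonneg (by norm_num)
  have hL1 : L ≤ Real.sqrt 2 / 800 := by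
    rw [hL, Real.log_le_iff_le_exp (by norm_num)]
    have := Real.add_one_le_exp (Real.sqrt 2 / 800)
    have : (1.4142:ℝ) ≤ Real.sqrt 2 := by
      apply Real.le_sqrt_of_sq_le; norm_num
    linarith
  have hx : 0 ≤ 8 * (k * L) := by positivity
  have hp : (566/567:ℝ)^k = Real.exp (-(8 * (k * L) / 8)) := by
    rw [mul_div_cancel_left₀ _ (by norm_num : (8:ℝ) ≠ 0), ← mul_neg, Real.exp_nat_mul,
      Real.exp_neg, hL, Real.exp_log (by norm_num)]
    norm_num
  have h1 := hfun_upper_p hx hp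
  have h2 : hfun (Real.sqrt 2 * y) ≤ hfun (8 * (k * L)) := by
    apply hfun_antitone hx (by change 0 ≤ Real.sqrt 2 * y; positivity)
    have : (k:ℝ) * L ≤ k * (Real.sqrt 2 / 800) := by gcongr
    have : Real.sqrt 2 * (k/100) ≤ Real.sqrt 2 * y := by gcongr
    linarith
  have h3 := sech_sq_lower k hy hy1 rfl
  have a := uNa_spec k rfl
  have b := uNb_spec k rfl
  have c := uNc_spec k rfl
  have d := uNd_spec k rfl
  have hu : ((uNa k : ℝ) + uNb k) - (uNc k + uNd k) ≤ uN k := by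
    have : uNa k + uNb k ≤ uN k + (uNc k + uNd k) := by unfold uN; omega
    have : ((uNa k : ℝ) + uNb k) ≤ uN k + (uNc k + uNd k) := by exact_mod_cast this
    linarith
  rw [le_div_iff₀ (by norm_num)]
  unfold Gf
  linarith

lemma Gf_int_step (n : ℕ) :
    ∫ y in (0:ℝ)..(n/100), Gf y ^ 2 ≤ sN n / 1000000000000 := by
  have hc : Continuous fun y => Gf y ^ 2 := Gf_continuous.pow 2
  induction n with
  | zero => simp [sN]
  | succ k ih =>
    rw [← intervalIntegral.integral_add_adjacent_intervals (hc.intervalIntegrable 0 (k/100))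
      (hc.intervalIntegrable _ _)]
    have hle : (k:ℝ)/100 ≤ ((k+1:ℕ):ℝ)/100 := by push_cast; linarith
    have h1 : ∫ y in ((k:ℝ)/100)..((k+1:ℕ)/100), Gf y ^ 2
        ≤ ∫ y in ((k:ℝ)/100)..((k+1:ℕ)/100), ((uN k : ℝ) / 100000)^2 := by
      refine intervalIntegral.integral_mono_on hle (hc.intervalIntegrable _ _)
        intervalIntegrable_const fun y hy => ?_
      have hy0 : 0 ≤ y := le_trans (by positivity) hy.1
      have := Gf_step k hy.1 (by have := hy.2; push_cast at this; exact this)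
      have := Gf_nonneg hy0
      gcongr
    rw [intervalIntegral.integral_const, smul_eq_mul] at h1
    push_cast at h1
    have e : (sN (k+1) : ℝ) = sN k + (uN k)^2 := by simp [sN]
    rw [e]
    push_cast
    nlinarith

lemma Gf_abs {y : ℝ} (hy : 0 ≤ y) : |Gf y| ≤ 3 * Real.exp (-y) := by
  rw [abs_of_nonneg (Gf_nonneg hy)]
  have h := Gf_le_exp hy
  have h2 : Real.exp (-(6/5*y)) ≤ Real.exp (-y) := by rw [Real.exp_le_exp]; linarith
  have := Real.exp_pos (-y)
  linarith

lemma Gf_sq_int : IntegrableOn (fun y => Gf y ^ 2) (Ioi 0) := by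
  refine intOn_of_decay (Gf_continuous.pow 2) (C := 9) fun y hy => ?_
  rw [abs_pow]
  calc |Gf y|^2 ≤ (3 * Real.exp (-y))^2 := by have := Gf_abs hy; gcongr
    _ = 9 * Real.exp (2 * (-y)) := by rw [mul_pow, two_mul, Real.exp_add]; ring
    _ ≤ _ := by gcongr; linarith

theorem Gf_norm : ∫ y in Ioi 0, Gf y ^ 2 ≤ 95/10000 := by
  have hu : Ioi (0:ℝ) = Ioc 0 4 ∪ Ioi 4 := (Ioc_union_Ioi_eq_Ioi (by norm_num)).symm
  have hi := Gf_sq_int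
  have h1 : ∫ y in Ioc (0:ℝ) 4, Gf y ^ 2 ≤ 91/10000 := by
    have := Gf_int_step 400
    have e : ((400:ℕ):ℝ)/100 = 4 := by norm_num
    rw [e, intervalIntegral.integral_of_le (by norm_num)] at this
    have hb : (sN 400 : ℝ) ≤ 9100000000 := by exact_mod_cast sN_bound
    linarith
  have h2 : ∫ y in Ioi (4:ℝ), Gf y ^ 2 ≤ 4/10000 := by
    have hm : ∫ y in Ioi (4:ℝ), Gf y ^ 2 ≤ ∫ y in Ioi (4:ℝ), 5 * Real.exp ((-(12/5:ℝ)) * y) := by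
      refine setIntegral_mono_on (hi.mono_set (Ioi_subset_Ioi (by norm_num)))
        ((integrableOn_exp_mul_Ioi (by norm_num) 4).const_mul 5) measurableSet_Ioi fun y hy => ?_
      have hy0 : 0 ≤ y := le_trans (by norm_num) (le_of_lt hy)
      calc Gf y ^ 2 ≤ (15/7 * Real.exp (-(6/5*y)))^2 := by
            have := Gf_nonneg hy0
            have := Gf_le_exp hy0
            gcongr
        _ = 225/49 * Real.exp ((-(12/5:ℝ)) * y) := by
            rw [mul_pow, ← Real.exp_nat_mul]; norm_num; ring
        _ ≤ _ := by have := Real.exp_pos ((-(12/5:ℝ)) * y); linarith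
    rw [integral_const_mul, integral_exp_mul_Ioi (by norm_num)] at hm
    have h9 : Real.exp (-(12/5:ℝ) * 4) ≤ (10/27:ℝ)^9 := by
      calc Real.exp (-(12/5:ℝ) * 4) ≤ Real.exp ((9:ℕ) * (-1)) := by
            rw [Real.exp_le_exp]; norm_num
        _ = (Real.exp (-1))^9 := by rw [Real.exp_nat_mul]
        _ ≤ (10/27)^9 := by
            gcongr
            rw [Real.exp_neg, inv_le_comm₀ (Real.exp_pos _) (by norm_num)]
            have := Real.exp_one_gt_d9
            norm_num; linarith
    norm_num at h9 hm
    linarith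
  rw [hu, setIntegral_union (Ioc_disjoint_Ioi le_rfl) measurableSet_Ioi
    (hi.mono_set Ioc_subset_Ioi_self) (hi.mono_set (Ioi_subset_Ioi (by norm_num)))]
  linarith

theorem prod_int {f g : ℝ → ℝ} {s : Set ℝ} (hf : Measurable f) (hg : Measurable g)
    (hf2 : IntegrableOn (fun y => f y ^ 2) s) (hg2 : IntegrableOn (fun y => g y ^ 2) s) :
    IntegrableOn (fun y => f y * g y) s := by
  refine Integrable.mono' (hf2.add hg2) (hf.mul hg).aestronglyMeasurable ?_
  refine Eventually.of_forall fun y => ?_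
  simp only [Pi.add_apply, Real.norm_eq_abs]
  rw [abs_le]
  constructor <;> nlinarith [sq_nonneg (f y + g y), sq_nonneg (f y - g y), sq_nonneg (f y),
    sq_nonneg (g y)]

theorem sech4_decay (y : ℝ) (hy : 0 ≤ y) :
    |(1 - Real.tanh y ^ 2) ^ 2| ≤ 4 * Real.exp (-(y/2)) := by
  have h1 := sech_sq_pos y
  have h2 := sech_sq_le_one y
  have h3 := sech_sq_le_exp y
  have h4 : Real.exp (-(2*y)) ≤ Real.exp (-(y/2)) := by rw [Real.exp_le_exp]; linarith
  rw [abs_of_nonneg (sq_nonneg _)]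
  nlinarith

theorem t2s_decay (y : ℝ) (hy : 0 ≤ y) :
    |Real.tanh y ^ 2 * (1 - Real.tanh y ^ 2)| ≤ 4 * Real.exp (-(y/2)) := by
  have h1 := sech_sq_pos y
  have h2 := sech_sq_le_one y
  have h3 := sech_sq_le_exp y
  have h4 : Real.exp (-(2*y)) ≤ Real.exp (-(y/2)) := by rw [Real.exp_le_exp]; linarith
  rw [abs_of_nonneg (mul_nonneg (sq_nonneg _) h1.le)]
  nlinarith [sq_nonneg (1 - Real.tanh y ^ 2)]

theorem sech4_int : IntegrableOn (fun y => (1 - Real.tanh y ^ 2) ^ 2) (Ioi 0) := by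
  have := continuous_tanh'
  exact intOn_of_decay (by fun_prop) sech4_decay

theorem t2s_int : IntegrableOn (fun y => Real.tanh y ^ 2 * (1 - Real.tanh y ^ 2)) (Ioi 0) := by
  have := continuous_tanh'
  exact intOn_of_decay (by fun_prop) t2s_decay

theorem t2s_val : ∫ y in Ioi 0, Real.tanh y ^ 2 * (1 - Real.tanh y ^ 2) = 1/3 := by
  have h := integral_Ioi_of_hasDerivAt_of_tendsto' (a := 0) (f := fun y => Real.tanh y ^ 3 / 3)
    (f' := fun y => Real.tanh y ^ 2 * (1 - Real.tanh y ^ 2)) (m := 1/3)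
    (fun y _ => by
      have := ((tanh_hasDerivAt y).pow 3).div_const 3
      exact this.congr_deriv (by push_cast; ring)) t2s_int
    (by simpa using (tendsto_tanh_one.pow 3).div_const 3)
  rw [h]; simp

theorem sech4_val : ∫ y in Ioi 0, (1 - Real.tanh y ^ 2) ^ 2 = 2/3 := by
  have h := integral_Ioi_of_hasDerivAt_of_tendsto' (a := 0)
    (f := fun y => Real.tanh y - Real.tanh y ^ 3 / 3)
    (f' := fun y => (1 - Real.tanh y ^ 2) ^ 2) (m := 1 - 1^3/3)
    (fun y _ => by
      have := (tanh_hasDerivAt y).sub (((tanh_hasDerivAt y).pow 3).div_const 3)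
      exact this.congr_deriv (by push_cast; ring)) sech4_int
    (tendsto_tanh_one.sub ((tendsto_tanh_one.pow 3).div_const 3))
  rw [h]; norm_num

set_option maxHeartbeats 2000000 in
theorem half_line {W : ℝ → ℝ} (hW : Differentiable ℝ W) (h0 : W 0 = 0)
    (hi : IntegrableOn (fun y => deriv W y ^ 2) (Ioi 0))
    (ho : ∫ y in Ioi 0, W y * psi (√2 * y) = 0) :
    (1/500) * ∫ y in Ioi 0, deriv W y ^ 2 ≤
      (∫ y in Ioi 0, deriv W y ^ 2) - 56/5 * ∫ y in Ioi 0, (1 - Real.tanh y ^ 2) * W y ^ 2 := by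
  obtain ⟨C, hC0, hC⟩ := growth hW h0 hi
  have hWc := hW.continuous
  have htc := continuous_tanh'
  have hGc := Gf_continuous
  have hpc := psi_continuous
  have hdm : Measurable (deriv W) := measurable_deriv W
  have hsm : Measurable (fun y => 1 - Real.tanh y ^ 2) := by
    have : Continuous (fun y => 1 - Real.tanh y ^ 2) := by fun_prop
    exact this.measurable
  have hexp : ∀ y : ℝ, Real.exp (y/2) * Real.exp (-(2*y)) = Real.exp (-(3/2*y)) := by
    intro y; rw [← Real.exp_add]; congr 1; ring
  have hle : ∀ y : ℝ, 0 ≤ y → Real.exp (-(3/2*y)) ≤ Real.exp (-(y/2)) := by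
    intro y hy; rw [Real.exp_le_exp]; linarith
  have hws : ∀ y, 0 ≤ y → |W y * (1 - Real.tanh y ^ 2)| ≤ 4 * C * Real.exp (-(y/2)) := by
    intro y hy
    rw [abs_mul, abs_of_pos (sech_sq_pos y)]
    have e1 := hC y hy
    have e3 := sech_sq_le_exp y
    calc |W y| * (1 - Real.tanh y ^ 2)
        ≤ (C * Real.exp (y/2)) * (4 * Real.exp (-(2*y))) := by
          gcongr
          exact (sech_sq_pos y).le
      _ = 4 * C * (Real.exp (y/2) * Real.exp (-(2*y))) := by ring
      _ ≤ 4 * C * Real.exp (-(y/2)) := by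
          rw [hexp]; have := hle y hy; gcongr
  have hg : ∀ y, 0 ≤ y → |W y * Real.tanh y * (1 - Real.tanh y ^ 2)|
      ≤ 4 * C * Real.exp (-(y/2)) := by
    intro y hy
    refine le_trans ?_ (hws y hy)
    rw [abs_mul, abs_mul, abs_mul]
    have e2 := abs_tanh_le_one y
    have : |W y| * |Real.tanh y| ≤ |W y| * 1 := by gcongr
    rw [mul_one] at this
    gcongr
  have hgi : IntegrableOn (fun y => W y * Real.tanh y * (1 - Real.tanh y ^ 2)) (Ioi 0) :=
    intOn_of_decay (by fun_prop) hg
  have hs : ∀ y, 0 ≤ y → |(1 - Real.tanh y ^ 2) * W y ^ 2| ≤ 4 * C^2 * Real.exp (-(y/2)) := by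
    intro y hy
    rw [abs_mul, abs_of_pos (sech_sq_pos y), abs_pow]
    have e1 := hC y hy
    have e3 := sech_sq_le_exp y
    calc (1 - Real.tanh y ^ 2) * |W y| ^ 2
        ≤ (4 * Real.exp (-(2*y))) * (C * Real.exp (y/2)) ^ 2 := by gcongr
      _ = 4 * C^2 * (Real.exp (y/2) * (Real.exp (y/2) * Real.exp (-(2*y)))) := by ring
      _ ≤ 4 * C^2 * Real.exp (-(y/2)) := by
          rw [hexp, ← Real.exp_add]
          gcongr; linarith
  have hsi : IntegrableOn (fun y => (1 - Real.tanh y ^ 2) * W y ^ 2) (Ioi 0) :=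
    intOn_of_decay (by fun_prop) hs
  have hds : IntegrableOn (fun y => deriv W y * (1 - Real.tanh y ^ 2)) (Ioi 0) :=
    prod_int hdm hsm hi sech4_int
  have hdG : IntegrableOn (fun y => deriv W y * Gf y) (Ioi 0) :=
    prod_int hdm hGc.measurable hi Gf_sq_int
  have hsG : IntegrableOn (fun y => (1 - Real.tanh y ^ 2) * Gf y) (Ioi 0) :=
    prod_int hsm hGc.measurable sech4_int Gf_sq_int
  set B := ∫ y in Ioi 0, W y * Real.tanh y * (1 - Real.tanh y ^ 2) with hB
  set D := ∫ y in Ioi 0, deriv W y ^ 2 with hD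
  set S := ∫ y in Ioi 0, (1 - Real.tanh y ^ 2) * W y ^ 2 with hS
  set J := ∫ y in Ioi 0, (1 - Real.tanh y ^ 2) * Gf y with hJ
  set N := ∫ y in Ioi 0, Gf y ^ 2 with hN
  set L := ∫ y in Ioi 0, deriv W y * Gf y with hL
  have hNle : N ≤ 95/10000 := Gf_norm
  have hJ0 : 0 ≤ J := setIntegral_nonneg measurableSet_Ioi fun y hy =>
    mul_nonneg (sech_sq_pos y).le (Gf_nonneg (le_of_lt hy))
  -- by parts
  have hP : ∫ y in Ioi 0, deriv W y * (1 - Real.tanh y ^ 2) = 2 * B := by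
    have h := integral_Ioi_of_hasDerivAt_of_tendsto' (a := 0)
      (f := fun y => W y * (1 - Real.tanh y ^ 2))
      (f' := fun y => deriv W y * (1 - Real.tanh y ^ 2)
        - 2 * (W y * Real.tanh y * (1 - Real.tanh y ^ 2))) (m := 0)
      (fun y _ => by
        have := (hW y).hasDerivAt.mul (((tanh_hasDerivAt y).pow 2).const_sub 1)
        exact this.congr_deriv (by simp only [Pi.pow_apply]; push_cast; ring)) (hds.sub (hgi.const_mul 2))
      (tendsto_of_decay hws)
    rw [integral_sub hds (hgi.const_mul 2), integral_const_mul] at h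
    simp only [h0] at h
    linarith
  have hwG : ∀ y, 0 ≤ y → |W y * Gf y| ≤ 3 * C * Real.exp (-(y/2)) := by
    intro y hy
    rw [abs_mul]
    have e1 := hC y hy
    have e3 := Gf_abs hy
    calc |W y| * |Gf y| ≤ (C * Real.exp (y/2)) * (3 * Real.exp (-y)) := by gcongr
      _ = 3 * C * (Real.exp (y/2) * Real.exp (-y)) := by ring
      _ = _ := by rw [← Real.exp_add]; congr 2; ring
  have hwp : ∀ y, 0 ≤ y → |W y * psi (√2 * y)| ≤ 2 * C * Real.exp (-(y/2)) := by
    intro y hy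
    rw [abs_mul]
    have e1 := hC y hy
    have hq : (7/5:ℝ) ≤ √2 := Real.le_sqrt_of_sq_le (by norm_num)
    have e3 := psi_decay (x := √2 * y) (by positivity)
    calc |W y| * |psi (√2 * y)|
        ≤ (C * Real.exp (y/2)) * (2 * Real.exp (-(7/8*(√2 * y)))) := by gcongr
      _ = 2 * C * (Real.exp (y/2) * Real.exp (-(7/8*(√2 * y)))) := by ring
      _ ≤ _ := by
        rw [← Real.exp_add]
        gcongr
        nlinarith
  have hwpi : IntegrableOn (fun y => W y * psi (√2 * y)) (Ioi 0) :=
    intOn_of_decay (by fun_prop) hwp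
  have hK : L + 128/63 * B = 0 := by
    have h := integral_Ioi_of_hasDerivAt_of_tendsto' (a := 0)
      (f := fun y => W y * Gf y)
      (f' := fun y => (deriv W y * Gf y
        + 128/63 * (W y * Real.tanh y * (1 - Real.tanh y ^ 2))) - √2 * (W y * psi (√2 * y)))
      (m := 0)
      (fun y _ => by
        have := (hW y).hasDerivAt.mul (Gf_hasDerivAt y)
        exact this.congr_deriv (by ring)) ((hdG.add (hgi.const_mul _)).sub (hwpi.const_mul _))
      (tendsto_of_decay hwG)
    have i1 : IntegrableOn (fun y => deriv W y * Gf y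
        + 128/63 * (W y * Real.tanh y * (1 - Real.tanh y ^ 2))) (Ioi 0) :=
      hdG.add (hgi.const_mul _)
    rw [integral_sub i1 (hwpi.const_mul _), integral_add hdG (hgi.const_mul _),
      integral_const_mul, integral_const_mul, ho] at h
    simp only [h0] at h
    linarith
  -- the remainder
  set a := 3 * B with ha
  set R : ℝ → ℝ := fun y => W y - a * Real.tanh y with hRdef
  have hRd : ∀ y, HasDerivAt R (deriv W y - a * (1 - Real.tanh y ^ 2)) y := fun y =>
    (hW y).hasDerivAt.sub ((tanh_hasDerivAt y).const_mul a)
  have hRder : ∀ y, deriv R y = deriv W y - a * (1 - Real.tanh y ^ 2) := fun y => (hRd y).deriv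
  have hexpand : ∀ y, deriv R y ^ 2 = (deriv W y ^ 2
      - (2 * a) * (deriv W y * (1 - Real.tanh y ^ 2))) + a^2 * (1 - Real.tanh y ^ 2) ^ 2 := by
    intro y; rw [hRder]; ring
  have i2 : IntegrableOn (fun y => deriv W y ^ 2
      - (2 * a) * (deriv W y * (1 - Real.tanh y ^ 2))) (Ioi 0) := hi.sub (hds.const_mul _)
  have hRi : IntegrableOn (fun y => deriv R y ^ 2) (Ioi 0) := by
    simp only [hexpand]
    exact i2.add (sech4_int.const_mul _)
  have hDr : ∫ y in Ioi 0, deriv R y ^ 2 = D - 2/3 * a^2 := by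
    simp only [hexpand]
    rw [integral_add i2 (sech4_int.const_mul _), integral_sub hi (hds.const_mul _),
      integral_const_mul, integral_const_mul, hP, sech4_val, ← hD, ha]
    ring
  have hRo : ∫ y in Ioi 0, R y * Real.tanh y * (1 - Real.tanh y ^ 2) = 0 := by
    have e : ∀ y, R y * Real.tanh y * (1 - Real.tanh y ^ 2) =
        W y * Real.tanh y * (1 - Real.tanh y ^ 2)
        - a * (Real.tanh y ^ 2 * (1 - Real.tanh y ^ 2)) := by
      intro y; simp only [hRdef]; ring
    simp only [e]
    rw [integral_sub hgi (t2s_int.const_mul _), integral_const_mul, t2s_val, ← hB, ha]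
    ring
  have hRS : ∫ y in Ioi 0, (1 - Real.tanh y ^ 2) * R y ^ 2 = S - a^2/3 := by
    have e : ∀ y, (1 - Real.tanh y ^ 2) * R y ^ 2 = ((1 - Real.tanh y ^ 2) * W y ^ 2
        - (2 * a) * (W y * Real.tanh y * (1 - Real.tanh y ^ 2)))
        + a^2 * (Real.tanh y ^ 2 * (1 - Real.tanh y ^ 2)) := by
      intro y; simp only [hRdef]; ring
    have i3 : IntegrableOn (fun y => (1 - Real.tanh y ^ 2) * W y ^ 2
        - (2 * a) * (W y * Real.tanh y * (1 - Real.tanh y ^ 2))) (Ioi 0) :=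
      hsi.sub (hgi.const_mul _)
    simp only [e]
    rw [integral_add i3 (t2s_int.const_mul _), integral_sub hsi (hgi.const_mul _),
      integral_const_mul, integral_const_mul, t2s_val, ← hB, ← hS, ha]
    ring
  have hpo := poincare12 (fun y => (hRd y).differentiableAt) (by simp [hRdef, h0]) hRi hRo
  rw [hRS, hDr] at hpo
  -- Cauchy-Schwarz
  have hRG : IntegrableOn (fun y => deriv R y * Gf y) (Ioi 0) :=
    prod_int (measurable_deriv R) hGc.measurable hRi Gf_sq_int
  have hRGv : ∫ y in Ioi 0, deriv R y * Gf y = L - a * J := by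
    have e : ∀ y, deriv R y * Gf y = deriv W y * Gf y
        - a * ((1 - Real.tanh y ^ 2) * Gf y) := by
      intro y; rw [hRder]; ring
    simp only [e]
    rw [integral_sub hdG (hsG.const_mul _), integral_const_mul]
  have hCS : ∀ c : ℝ, 0 ≤ (D - 2/3 * a^2) - 2 * c * (L - a * J) + c^2 * N := by
    intro c
    have hn : 0 ≤ ∫ y in Ioi 0, (deriv R y - c * Gf y) ^ 2 :=
      integral_nonneg fun y => sq_nonneg _
    have e : ∀ y, (deriv R y - c * Gf y) ^ 2 = (deriv R y ^ 2 - (2 * c) * (deriv R y * Gf y))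
        + c^2 * Gf y ^ 2 := by intro y; ring
    have i4 : IntegrableOn (fun y => deriv R y ^ 2 - (2 * c) * (deriv R y * Gf y)) (Ioi 0) :=
      hRi.sub (hRG.const_mul _)
    simp only [e] at hn
    rw [integral_add i4 (Gf_sq_int.const_mul _), integral_sub hRi (hRG.const_mul _),
      integral_const_mul, integral_const_mul, hDr, hRGv] at hn
    exact hn
  set K := L - a * J with hKdef
  have hc := hCS (K * (10000/95))
  have hK2 : K^2 ≤ 95/10000 * (D - 2/3 * a^2) := by
    have : (K * (10000/95))^2 * N ≤ (K * (10000/95))^2 * (95/10000) := by gcongr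
    nlinarith
  have hKa : K = - (a * (128/189 + J)) := by
    rw [hKdef]; linarith
  have ha2 : a^2 * (128/189)^2 ≤ K^2 := by
    have e : K^2 = a^2 * (128/189 + J)^2 := by rw [hKa]; ring
    rw [e]
    have : (128/189:ℝ)^2 ≤ (128/189 + J)^2 := by nlinarith
    exact mul_le_mul_of_nonneg_left this (sq_nonneg a)
  nlinarith

theorem even_int (f : ℝ → ℝ) (hf : ∀ x, f (-x) = f x) :
    ∫ x, f x = 4 * ∫ y in Ioi 0, f (2 * y) := by
  have h1 : ∀ x, f x = f |x| := by
    intro x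
    rcases abs_cases x with ⟨h, _⟩ | ⟨h, _⟩ <;> rw [h]
    rw [hf]
  have h2 := integral_comp_abs (f := f)
  simp only [← h1] at h2
  have h3 := integral_comp_mul_left_Ioi f 0 (show (0:ℝ) < 2 by norm_num)
  rw [h2, h3]
  simp only [mul_zero, smul_eq_mul]
  ring

theorem Z1_two (y : ℝ) : Z1 (2 * y) = (2 : ℝ) ^ (-(3 : ℝ) / 4) * Real.sqrt 3 * psi (√2 * y) := by
  have hq : √2 * √2 = 2 := Real.mul_self_sqrt (by norm_num)
  have hq0 : √2 ≠ 0 := by positivity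
  have e1 : 2 * y / √2 = √2 * y := by
    rw [div_eq_iff hq0]; linear_combination (-y) * hq
  have e2 : 2 * y / (8 * √2) = √2 * y / 8 := by
    rw [div_eq_div_iff (by positivity) (by norm_num)]; linear_combination (-(8*y)) * hq
  unfold Z1 psi sech
  rw [e1, e2]; ring

end aux

theorem coercivity_step3 :
    ∃ κ > 0, ∀ w : ℝ → ℝ,
      (∀ x : ℝ, w (-x) = -w x) →
      Differentiable ℝ w →
      Integrable (fun x => (w x) ^ 2) →
      Integrable (fun x => (deriv w x) ^ 2) →
      (∫ x : ℝ, w x * Z1 x) = 0 →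
      (∫ x : ℝ, ((3 / 4) * (deriv w x) ^ 2 - (21 / 10) * sech (x / 2) ^ 2 * (w x) ^ 2))
        ≥ κ * (∫ x : ℝ, (deriv w x) ^ 2) := by
  refine ⟨3/2000, by norm_num, ?_⟩
  intro w hodd hw hw2 hd2 hZ
  have hde : ∀ x, deriv w (-x) = deriv w x := by
    intro x
    have h1 : HasDerivAt (fun z => -w (-z)) (deriv w (-x)) x := by
      have := ((hw (-x)).hasDerivAt.comp x (hasDerivAt_neg x)).neg
      exact this.congr_deriv (by ring)
    have h2 : (fun z => -w (-z)) = w := by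
      funext z; rw [hodd, neg_neg]
    rw [h2] at h1
    exact h1.deriv.symm
  have hZodd : ∀ x, Z1 (-x) = - Z1 x := by
    intro x
    unfold Z1 sech
    rw [neg_div (Real.sqrt 2) x, neg_div (8 * Real.sqrt 2) x, Real.tanh_neg, Real.cosh_neg, Real.cosh_neg]
    ring
  have hsev : ∀ x, sech (-x) = sech x := by
    intro x; unfold sech; rw [Real.cosh_neg]
  have hs2 : ∀ y, sech y ^ 2 = 1 - Real.tanh y ^ 2 := by
    intro y; rw [sech_sq]; unfold sech; rw [div_pow, one_pow]
  have hsc : Continuous sech := by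
    unfold sech
    exact continuous_const.div Real.continuous_cosh fun x => (Real.cosh_pos x).ne'
  have hswi : Integrable (fun x => (21 / 10) * sech (x / 2) ^ 2 * (w x) ^ 2) := by
    refine Integrable.mono' (hw2.const_mul (21/10)) ?_ ?_
    · have := hw.continuous
      exact Continuous.aestronglyMeasurable (by fun_prop)
    · refine Filter.Eventually.of_forall fun x => ?_
      have h1 := sech_sq_pos (x/2)
      have h2 := sech_sq_le_one (x/2)
      rw [hs2, Real.norm_eq_abs, abs_of_nonneg (by positivity)]
      nlinarith [sq_nonneg (w x)]
  rw [integral_sub (hd2.const_mul _) hswi, integral_const_mul]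
  rw [even_int (fun x => deriv w x ^ 2) (fun x => by simp only [hde]),
    even_int (fun x => (21 / 10) * sech (x / 2) ^ 2 * (w x) ^ 2)
      (fun x => by simp only [hodd, neg_div, hsev, neg_sq])]
  rw [even_int (fun x => w x * Z1 x) (fun x => by simp only [hodd, hZodd, neg_mul_neg])] at hZ
  have hWd : ∀ y, HasDerivAt (fun y => w (2 * y)) (2 * deriv w (2 * y)) y := by
    intro y
    have := (hw (2*y)).hasDerivAt.comp y ((hasDerivAt_id y).const_mul 2)
    exact this.congr_deriv (by ring)
  have hder : ∀ y, deriv (fun y => w (2 * y)) y ^ 2 = 4 * deriv w (2 * y) ^ 2 := by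
    intro y; rw [(hWd y).deriv]; ring
  have hdi : Integrable (fun y => deriv w (2 * y) ^ 2) := hd2.comp_mul_left' (by norm_num)
  have h0 : w 0 = 0 := by have := hodd 0; rw [neg_zero] at this; linarith
  have hc : (2 : ℝ) ^ (-(3 : ℝ) / 4) * Real.sqrt 3 ≠ 0 := by positivity
  have key := half_line (W := fun y => w (2 * y)) (fun y => (hWd y).differentiableAt)
    (by simpa using h0)
    (by simp only [hder]; exact (hdi.const_mul 4).integrableOn)
    (by
      have e : ∀ y, w (2 * y) * Z1 (2 * y) = (2 : ℝ) ^ (-(3 : ℝ) / 4) * Real.sqrt 3 *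
          (w (2 * y) * psi (Real.sqrt 2 * y)) := by
        intro y; rw [Z1_two]; ring
      simp only [e] at hZ
      rw [integral_const_mul] at hZ
      have h4 := (mul_eq_zero.mp hZ).resolve_left (by norm_num)
      exact (mul_eq_zero.mp h4).resolve_left hc)
  simp only [hder] at key
  rw [integral_const_mul] at key
  have e2 : ∀ y, (21 / 10) * sech (2 * y / 2) ^ 2 * (w (2 * y)) ^ 2 =
      (21 / 10) * ((1 - Real.tanh y ^ 2) * w (2 * y) ^ 2) := by
    intro y
    rw [mul_div_cancel_left₀ y (by norm_num : (2:ℝ) ≠ 0), hs2]; ring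
  simp only [e2]
  rw [integral_const_mul]
  linarith
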